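/- Let s ≥ 2 be an integer, let c > λ_s^{-1}, and let B be an infinite set of positive integers whose counting function satisfies B(n) ≥ (1+o(1))·c·log n. For each integer n ≥ 2 for which it exists, let m(n) be the smallest positive integer with B(m(n)) = ⌊((c + λ_s^{-1})/2)·log n⌋. Then, as n → ∞, Σ_{b∈B, b<m(n)} s^{-s} · Σ_{x_1 > x_2 > ⋯ > x_s ≥ 1, x_1+⋯+x_s = n−b} (x_1 ⋯ x_s)^{-1+1/s} = (1+o(1)) · ((c·λ_s + 1)/2) · log n. -/

import Mathlib

open Finset Filter

/-- `λ_s = Γ(1/s)^s / (s^s · s!)`. -/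
noncomputable def lambdaS (s : ℕ) : ℝ :=
  (Real.Gamma (1 / s)) ^ s / ((s : ℝ) ^ s * (Nat.factorial s))

/-- The counting function `B(n) = |B ∩ [1, n]|` of a set of positive integers. -/
noncomputable def countB (B : Set ℕ) (n : ℕ) : ℕ := (B ∩ Set.Icc 1 n).ncard

/-!
The inner sum over decreasing tuples of sum `N` is the `N`-th coefficient of the `s`-th elementary
symmetric function `e_s` of the variables `a ^ (-1 + 1/s) * X ^ a`, `a ≥ 1`. The coefficients of
the first power sum `p_1` are asymptotic to `Γ(1/s)` times those of `(1 - X) ^ (-1/s)`, and the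
coefficients of the higher `p_k` are negligible against those of `(1 - X) ^ (-k/s)`. Since such
comparisons multiply, Newton's identities reduce `e_s` to its leading part `p_1 ^ s / s!`, so its
coefficients tend to `Γ(1/s) ^ s / s!`. Put `κ = (c + λ_s⁻¹) / 2`. Then `B(m(n)) ≤ κ log n` and
`κ < c` force `m(n) = o(n)`; hence `n - b → ∞` uniformly in `b < m(n)`, and the outer sum consists
of about `κ log n` terms, each close to `λ_s`.
-/

open Asymptotics Topology

section Multichoose

variable {p q : ℝ}

lemma multichoose_eq_prod_div_factorial (p : ℝ) (n : ℕ) :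
    Ring.multichoose p n = (∏ j ∈ range n, (p + j)) / n.factorial := by
  rw [eq_div_iff (by positivity), mul_comm, ← nsmul_eq_mul,
    Ring.factorial_nsmul_multichoose_eq_ascPochhammer, Polynomial.ascPochhammer_smeval_eq_eval]
  induction n with
  | zero => simp
  | succ n ih => rw [ascPochhammer_succ_eval, ih, prod_range_succ]

lemma multichoose_pos (hp : 0 < p) (n : ℕ) : 0 < Ring.multichoose p n := by
  rw [multichoose_eq_prod_div_factorial]
  exact div_pos (prod_pos fun j _ ↦ by positivity) (by positivity)

lemma tendsto_rpow_sub_one_div_multichoose (hp : 0 < p) :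
    Tendsto (fun n : ℕ ↦ (n : ℝ) ^ (p - 1) / Ring.multichoose p n) atTop (𝓝 (Real.Gamma p)) := by
  have hcorrection : Tendsto (fun n : ℕ ↦ 1 + p / n) atTop (𝓝 1) := by
    simpa using (tendsto_const_div_atTop_nhds_zero_nat p).const_add 1
  have hGamma := (Real.GammaSeq_tendsto_Gamma p).mul hcorrection
  rw [mul_one] at hGamma
  refine hGamma.congr' ?_
  filter_upwards [eventually_gt_atTop 0] with n hn
  have hprod : ∏ j ∈ range n, (p + j) ≠ 0 := (prod_pos fun j _ ↦ by positivity).ne'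
  have hlast : p + n ≠ 0 := by positivity
  rw [Real.GammaSeq, multichoose_eq_prod_div_factorial, prod_range_succ,
    Real.rpow_sub_one (by positivity)]
  field_simp
  ring

lemma multichoose_isTheta_rpow (hp : 0 < p) :
    Ring.multichoose p =Θ[atTop] fun n : ℕ ↦ (n : ℝ) ^ (p - 1) :=
  isTheta_of_div_tendsto_nhds_ne_zero (tendsto_rpow_sub_one_div_multichoose hp)
    (Real.Gamma_pos_of_pos hp).ne'

lemma natCast_rpow_isLittleO_natCast_rpow (h : p < q) :
    (fun n : ℕ ↦ (n : ℝ) ^ p) =o[atTop] fun n : ℕ ↦ (n : ℝ) ^ q := by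
  refine (isLittleO_iff_tendsto' ?_).2 ?_
  · filter_upwards [eventually_gt_atTop 0] with n hn hzero
    exact absurd hzero (by positivity)
  · have hlim : Tendsto (fun n : ℕ ↦ (n : ℝ) ^ (-(q - p))) atTop (𝓝 0) :=
      (tendsto_rpow_neg_atTop (sub_pos.2 h)).comp tendsto_natCast_atTop_atTop
    refine hlim.congr' ?_
    filter_upwards [eventually_gt_atTop 0] with n hn
    rw [neg_sub, Real.rpow_sub (by positivity)]

lemma multichoose_sub_isBigO (hp : 0 < p) (i : ℕ) :
    (fun n ↦ Ring.multichoose p (n - i)) =O[atTop] Ring.multichoose p := by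
  have hshift : (fun n : ℕ ↦ ((n - i : ℕ) : ℝ)) ~[atTop] fun n : ℕ ↦ (n : ℝ) := by
    have hconst : (fun _ : ℕ ↦ -(i : ℝ)) =o[atTop] fun n : ℕ ↦ (n : ℝ) :=
      (isLittleO_const_id_atTop _).comp_tendsto tendsto_natCast_atTop_atTop
    refine hconst.congr' ?_ .rfl
    filter_upwards [eventually_ge_atTop i] with n hn
    simp [Nat.cast_sub hn]
  have hrpow : (fun n : ℕ ↦ ((n - i : ℕ) : ℝ) ^ (p - 1)) =Θ[atTop]
      fun n : ℕ ↦ (n : ℝ) ^ (p - 1) :=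
    hshift.isTheta.rpow (.of_forall fun n ↦ Nat.cast_nonneg _)
      (.of_forall fun n ↦ Nat.cast_nonneg _)
  exact (((multichoose_isTheta_rpow hp).isBigO.comp_tendsto (tendsto_sub_atTop_nat i)).trans
    hrpow.isBigO).trans (multichoose_isTheta_rpow hp).symm.isBigO

lemma multichoose_isLittleO_multichoose (hp : 0 < p) (hpq : p < q) :
    Ring.multichoose p =o[atTop] Ring.multichoose q :=
  ((multichoose_isTheta_rpow hp).isBigO.trans_isLittleO
    (natCast_rpow_isLittleO_natCast_rpow (by linarith))).trans_isBigO
    (multichoose_isTheta_rpow (hp.trans hpq)).symm.isBigO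

lemma mk_multichoose_mul_mk_multichoose {R : Type*} [CommRing R] [BinomialRing R] (p q : R) :
    PowerSeries.mk (Ring.multichoose p) * PowerSeries.mk (Ring.multichoose q) =
      PowerSeries.mk (Ring.multichoose (p + q)) := by
  have hrescale (r : R) : PowerSeries.mk (Ring.multichoose r) =
      PowerSeries.rescale (-1 : R) (PowerSeries.binomialSeries R (-r)) := by
    ext n
    rw [PowerSeries.coeff_mk, PowerSeries.coeff_rescale, PowerSeries.binomialSeries_coeff,
      Ring.choose_neg', smul_eq_mul, mul_one, Units.smul_def, zsmul_eq_mul,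
      Int.cast_negOnePow_natCast, ← mul_assoc, ← mul_pow, neg_one_mul, neg_neg, one_pow, one_mul]
  rw [hrescale, hrescale, hrescale, ← map_mul, ← PowerSeries.binomialSeries_add, neg_add]

end Multichoose

section CoeffAsymp

open PowerSeries

variable {F G : ℝ⟦X⟧} {p q A B : ℝ}

lemma abs_coeff_mul_le {a b : ℝ} (hF : ∀ n, |coeff n F| ≤ a * Ring.multichoose p n)
    (hG : ∀ n, |coeff n G| ≤ b * Ring.multichoose q n) (n : ℕ) :
    |coeff n (F * G)| ≤ a * b * Ring.multichoose (p + q) n := by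
  rw [coeff_mul, ← coeff_mk n (Ring.multichoose (p + q)), ← mk_multichoose_mul_mk_multichoose,
    coeff_mul, mul_sum]
  refine (abs_sum_le_sum_abs _ _).trans (sum_le_sum fun x _ ↦ ?_)
  rw [abs_mul, coeff_mk, coeff_mk, mul_mul_mul_comm]
  exact mul_le_mul (hF _) (hG _) (abs_nonneg _) ((abs_nonneg _).trans (hF _))

lemma coeff_coe_mul_isLittleO (hp : 0 < p) (hq : 0 < q)
    (hG : (coeff · G) =O[atTop] Ring.multichoose q) (P : Polynomial ℝ) :
    (fun n ↦ coeff n ((P : ℝ⟦X⟧) * G)) =o[atTop] Ring.multichoose (p + q) := by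
  induction P using Polynomial.induction_on' with
  | add P Q hP hQ => simpa only [Polynomial.coe_add, add_mul, map_add] using hP.add hQ
  | monomial i a =>
    have hshift : (fun n ↦ coeff (n - i) G) =O[atTop] Ring.multichoose q :=
      (hG.comp_tendsto (tendsto_sub_atTop_nat i)).trans (multichoose_sub_isBigO hq i)
    have hsmall := (hshift.const_mul_left a).trans_isLittleO
      (multichoose_isLittleO_multichoose hq (lt_add_of_pos_left q hp))
    refine hsmall.congr' ?_ .rfl
    filter_upwards [eventually_ge_atTop i] with n hn
    rw [Polynomial.coe_monomial, monomial_eq_C_mul_X_pow, mul_assoc, coeff_C_mul,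
      coeff_X_pow_mul', if_pos hn]

lemma coeff_mul_isLittleO (hp : 0 < p) (hq : 0 < q)
    (hF : (coeff · F) =o[atTop] Ring.multichoose p)
    (hG : (coeff · G) =O[atTop] Ring.multichoose q) :
    (fun n ↦ coeff n (F * G)) =o[atTop] Ring.multichoose (p + q) := by
  obtain ⟨b, hb, hGb⟩ : ∃ b, 0 < b ∧ ∀ n, |coeff n G| ≤ b * Ring.multichoose q n := by
    obtain ⟨b, hGb⟩ :=
      (isBigO_nat_atTop_iff fun n h ↦ absurd h (multichoose_pos hq n).ne').1 hG
    refine ⟨max b 1, by positivity, fun n ↦ ?_⟩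
    have hpos := multichoose_pos hq n
    calc |coeff n G| ≤ b * Ring.multichoose q n := by
          simpa only [Real.norm_eq_abs, abs_of_pos hpos] using hGb n
      _ ≤ max b 1 * Ring.multichoose q n := by gcongr; exact le_max_left b 1
  refine isLittleO_iff.2 fun ε hε ↦ ?_
  obtain ⟨K, hK⟩ := eventually_atTop.1 (isLittleO_iff.1 hF (show 0 < ε / 2 / b by positivity))
  let head : ℝ⟦X⟧ := trunc K F
  have htail (n : ℕ) : |coeff n (F - head)| ≤ ε / 2 / b * Ring.multichoose p n := by
    rw [map_sub, Polynomial.coeff_coe, coeff_trunc]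
    split_ifs with hn
    · simpa using mul_nonneg (by positivity) (multichoose_pos hp n).le
    · simpa [abs_of_pos (multichoose_pos hp n)] using hK n (not_lt.1 hn)
  filter_upwards [isLittleO_iff.1 (coeff_coe_mul_isLittleO hp hq hG (trunc K F)) (half_pos hε)]
    with n hhead
  have hpos := multichoose_pos (add_pos hp hq) n
  rw [Real.norm_eq_abs, Real.norm_of_nonneg hpos.le] at hhead ⊢
  calc |coeff n (F * G)| = |coeff n (head * G) + coeff n ((F - head) * G)| := by
        rw [← map_add, ← add_mul, add_sub_cancel]
    _ ≤ |coeff n (head * G)| + |coeff n ((F - head) * G)| := abs_add_le _ _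
    _ ≤ ε / 2 * Ring.multichoose (p + q) n + ε / 2 / b * b * Ring.multichoose (p + q) n :=
        add_le_add hhead (abs_coeff_mul_le htail hGb n)
    _ = ε * Ring.multichoose (p + q) n := by field_simp; ring

/-- The coefficients of `F` are asymptotic to `A` times those of `(1 - X) ^ (-p)`. The error is a
little-o of the comparison sequence rather than an equivalence, so that `A = 0` is meaningful. -/
def HasCoeffAsymp (F : ℝ⟦X⟧) (p A : ℝ) : Prop :=
  (fun n ↦ coeff n F - A * Ring.multichoose p n) =o[atTop] Ring.multichoose p

namespace HasCoeffAsymp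

lemma isBigO (hF : HasCoeffAsymp F p A) : (coeff · F) =O[atTop] Ring.multichoose p := by
  have hadd := (IsLittleO.isBigO hF).add (isBigO_const_mul_self A (Ring.multichoose p) atTop)
  exact hadd.congr_left fun n ↦ sub_add_cancel _ _

lemma const_smul (hF : HasCoeffAsymp F p A) (a : ℝ) : HasCoeffAsymp (a • F) p (a * A) := by
  simpa only [HasCoeffAsymp, coeff_smul, smul_eq_mul, mul_sub, mul_assoc] using
    hF.const_mul_left a

lemma sum {ι : Type*} {t : Finset ι} {F : ι → ℝ⟦X⟧} {A : ι → ℝ}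
    (hF : ∀ i ∈ t, HasCoeffAsymp (F i) p (A i)) :
    HasCoeffAsymp (∑ i ∈ t, F i) p (∑ i ∈ t, A i) := by
  refine (IsLittleO.sum hF).congr_left fun n ↦ ?_
  rw [Finset.sum_apply, sum_sub_distrib, map_sum, sum_mul]

lemma mul (hp : 0 < p) (hq : 0 < q) (hF : HasCoeffAsymp F p A) (hG : HasCoeffAsymp G q B) :
    HasCoeffAsymp (F * G) (p + q) (A * B) := by
  let S (r : ℝ) : ℝ⟦X⟧ := mk (Ring.multichoose r)
  have hF' : (fun n ↦ coeff n (F - C A * S p)) =o[atTop] Ring.multichoose p := by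
    simpa only [map_sub, coeff_C_mul, S, coeff_mk, HasCoeffAsymp] using hF
  have hG' : (fun n ↦ coeff n (G - C B * S q)) =o[atTop] Ring.multichoose q := by
    simpa only [map_sub, coeff_C_mul, S, coeff_mk, HasCoeffAsymp] using hG
  have hS : (coeff · (C A * S p)) =O[atTop] Ring.multichoose p := by
    simpa only [coeff_C_mul, S, coeff_mk] using isBigO_const_mul_self A _ _
  have herror := (coeff_mul_isLittleO hp hq hF' hG.isBigO).add
    ((coeff_mul_isLittleO hq hp hG' hS).congr_right fun n ↦ by rw [add_comm])
  refine herror.congr_left fun n ↦ ?_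
  have hsplit : (F - C A * S p) * G + (G - C B * S q) * (C A * S p) =
      F * G - C (A * B) * S (p + q) := by
    rw [map_mul, ← show S p * S q = S (p + q) from mk_multichoose_mul_mk_multichoose p q]
    ring
  rw [← map_add, hsplit, map_sub, coeff_C_mul, coeff_mk]

end HasCoeffAsymp

lemma hasCoeffAsymp_iff_tendsto (hp : 0 < p) :
    HasCoeffAsymp F p A ↔
      Tendsto (fun n ↦ coeff n F / Ring.multichoose p n) atTop (𝓝 A) := by
  have hne (n : ℕ) : Ring.multichoose p n ≠ 0 := (multichoose_pos hp n).ne'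
  rw [HasCoeffAsymp, isLittleO_iff_tendsto fun n h ↦ absurd h (hne n),
    ← tendsto_sub_nhds_zero_iff (x := A)]
  simp only [sub_div, mul_div_cancel_right₀ _ (hne _)]

end CoeffAsymp

section SymmetricSeries

open PowerSeries

variable {R : Type*} [CommRing R]

lemma mul_sum_powersetCard_prod_eq_sum_antidiagonal {ι : Type*} (t : Finset ι) (g : ι → R)
    (k : ℕ) :
    k * ∑ S ∈ t.powersetCard k, ∏ i ∈ S, g i =
      (-1) ^ (k + 1) * ∑ a ∈ antidiagonal k with a.1 < k,
        (-1) ^ a.1 * (∑ S ∈ t.powersetCard a.1, ∏ i ∈ S, g i) * ∑ i ∈ t, g i ^ a.2 := by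
  have hesymm (j : ℕ) : MvPolynomial.aeval (fun i : t ↦ g i) (MvPolynomial.esymm t ℤ j) =
      ∑ S ∈ t.powersetCard j, ∏ i ∈ S, g i := by
    rw [MvPolynomial.aeval_esymm_eq_multiset_esymm, ← esymm_map_val]
    congr 1
    exact t.val.attach_map_val' g
  have hpsum (j : ℕ) : MvPolynomial.aeval (fun i : t ↦ g i) (MvPolynomial.psum t ℤ j) =
      ∑ i ∈ t, g i ^ j := by
    simpa [MvPolynomial.psum] using sum_coe_sort t (g · ^ j)
  simpa only [map_mul, map_sum, map_pow, map_neg, map_one, map_natCast, hesymm, hpsum] using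
    congrArg (MvPolynomial.aeval fun i : t ↦ g i) (MvPolynomial.mul_esymm_eq_sum t ℤ k)

/-- The `k`-th elementary symmetric function of the infinitely many variables `f a * X ^ a`,
`a ≥ 1`: its `N`-th coefficient sums `∏ a ∈ S, f a` over the `k`-element sets `S` of positive
integers of sum `N`. -/
noncomputable def esymmSeries (f : ℕ → R) (k : ℕ) : R⟦X⟧ :=
  mk fun N ↦ ∑ S ∈ powersetCard k (Icc 1 N) with ∑ a ∈ S, a = N, ∏ a ∈ S, f a

/-- The `k`-th power sum of the infinitely many variables `f a * X ^ a`, `a ≥ 1`. -/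
noncomputable def psumSeries (f : ℕ → R) (k : ℕ) : R⟦X⟧ :=
  mk fun N ↦ ∑ a ∈ Icc 1 N with k * a = N, f a ^ k

variable (f : ℕ → R) {k M N : ℕ}

lemma coeff_esymmSeries_of_le (hN : N ≤ M) :
    coeff N (esymmSeries f k) =
      ∑ S ∈ powersetCard k (Icc 1 M) with ∑ a ∈ S, a = N, ∏ a ∈ S, f a := by
  rw [esymmSeries, coeff_mk]
  congr 1
  ext S
  simp only [mem_filter, mem_powersetCard, and_congr_left_iff]
  rintro hS -
  refine ⟨fun h ↦ h.trans (Icc_subset_Icc_right hN), fun h a ha ↦ mem_Icc.2 ⟨?_, ?_⟩⟩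
  · exact (mem_Icc.1 (h ha)).1
  · exact hS ▸ single_le_sum (fun b _ ↦ Nat.zero_le b) ha

lemma coeff_sum_prod_monomial_eq_coeff_esymmSeries (hN : N ≤ M) :
    coeff N (∑ S ∈ powersetCard k (Icc 1 M), ∏ a ∈ S, monomial a (f a)) =
      coeff N (esymmSeries f k) := by
  simp_rw [coeff_esymmSeries_of_le f hN, map_sum, prod_monomial, coeff_monomial, sum_filter,
    eq_comm]

lemma coeff_sum_monomial_pow_eq_coeff_psumSeries (hk : k ≠ 0) (hN : N ≤ M) :
    coeff N (∑ a ∈ Icc 1 M, monomial a (f a) ^ k) = coeff N (psumSeries f k) := by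
  simp_rw [psumSeries, coeff_mk, map_sum, monomial_pow, coeff_monomial, ← sum_filter,
    eq_comm (a := N)]
  congr 1
  ext a
  simp only [mem_filter, mem_Icc, and_congr_left_iff, and_congr_right_iff]
  rintro rfl -
  exact iff_of_true ((Nat.le_mul_of_pos_left a hk.bot_lt).trans hN)
    (Nat.le_mul_of_pos_left a hk.bot_lt)

lemma coeff_mul_congr {F F' G G' : R⟦X⟧} (hF : ∀ n ≤ N, coeff n F = coeff n F')
    (hG : ∀ n ≤ N, coeff n G = coeff n G') : coeff N (F * G) = coeff N (F' * G') := by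
  simp_rw [coeff_mul]
  refine sum_congr rfl fun x hx ↦ ?_
  have hsum : x.1 + x.2 = N := mem_antidiagonal.1 hx
  rw [hF x.1 (by lia), hG x.2 (by lia)]

lemma natCast_smul_esymmSeries_eq_sum (k : ℕ) :
    (k : R) • esymmSeries f k = ∑ a ∈ antidiagonal k with a.1 < k,
      ((-1) ^ (k + 1 + a.1) : R) • (esymmSeries f a.1 * psumSeries f a.2) := by
  ext N
  have hnewton := congrArg (coeff N)
    (mul_sum_powersetCard_prod_eq_sum_antidiagonal (Icc 1 N) (fun a ↦ monomial a (f a)) k)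
  rw [← map_natCast (C (R := R)), coeff_C_mul,
    coeff_sum_prod_monomial_eq_coeff_esymmSeries f le_rfl, mul_sum] at hnewton
  rw [coeff_smul, smul_eq_mul, hnewton, map_sum, map_sum]
  refine sum_congr rfl fun a ha ↦ ?_
  obtain ⟨hak, hlt⟩ := mem_filter.1 ha
  rw [HasAntidiagonal.mem_antidiagonal] at hak
  rw [mul_assoc, ← mul_assoc, ← pow_add, coeff_smul, smul_eq_mul, ← map_one (C (R := R)),
    ← map_neg, ← map_pow, coeff_C_mul]
  congr 1
  exact coeff_mul_congr (fun n hn ↦ coeff_sum_prod_monomial_eq_coeff_esymmSeries f hn)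
    fun n hn ↦ coeff_sum_monomial_pow_eq_coeff_psumSeries f (by lia) hn

lemma esymmSeries_zero : esymmSeries f 0 = 1 := by
  ext N
  rw [esymmSeries, coeff_mk, coeff_one, sum_filter, powersetCard_zero, sum_singleton, sum_empty,
    prod_empty]
  exact if_congr eq_comm rfl rfl

lemma coeff_psumSeries (hN : N ≠ 0) (hk : k ≠ 0) :
    coeff N (psumSeries f k) = if k ∣ N then f (N / k) ^ k else 0 := by
  rw [psumSeries, coeff_mk]
  split_ifs with hdvd
  · obtain ⟨a, rfl⟩ := hdvd
    have ha : {b ∈ Icc 1 (k * a) | k * b = k * a} = {a} := by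
      ext b
      have hle : a ≤ k * a := Nat.le_mul_of_pos_left a hk.bot_lt
      simp only [mem_filter, mem_Icc, mem_singleton, mul_right_inj' hk]
      refine and_iff_right_of_imp ?_
      rintro rfl
      exact ⟨Nat.pos_of_ne_zero (right_ne_zero_of_mul hN), hle⟩
    rw [ha, sum_singleton, Nat.mul_div_cancel_left a hk.bot_lt]
  · rw [filter_false_of_mem fun a _ ha ↦ hdvd ⟨a, ha.symm⟩, sum_empty]

end SymmetricSeries

section Growth

open PowerSeries

variable {f : ℕ → ℝ} {α A : ℝ} {k : ℕ}

lemma natCast_div_isTheta (hk : k ≠ 0) :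
    (fun N : ℕ ↦ ((N / k : ℕ) : ℝ)) =Θ[atTop] fun N : ℕ ↦ (N : ℝ) := by
  have hk' : (k : ℝ)⁻¹ ≠ 0 := by positivity
  have hlim : Tendsto (fun N : ℕ ↦ (k : ℝ)⁻¹ * N) atTop atTop :=
    tendsto_natCast_atTop_atTop.const_mul_atTop (by positivity)
  have hfloor := ((isEquivalent_nat_floor (R := ℝ)).comp_tendsto hlim).isTheta
  simpa only [Function.comp_def, inv_mul_eq_div, Nat.floor_div_eq_div] using
    (isTheta_const_mul_right hk').1 hfloor

lemma coeff_psumSeries_isLittleO (hα : 0 < α) (hf : f =O[atTop] Ring.multichoose α)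
    (hk : 2 ≤ k) : (coeff · (psumSeries f k)) =o[atTop] Ring.multichoose (k * α) := by
  have hdiv : (fun N ↦ f (N / k)) =O[atTop] fun N : ℕ ↦ (N : ℝ) ^ (α - 1) :=
    ((hf.trans (multichoose_isTheta_rpow hα).isBigO).comp_tendsto
      (Nat.tendsto_div_const_atTop (by lia))).trans
      ((natCast_div_isTheta (by lia)).rpow (.of_forall fun N ↦ Nat.cast_nonneg _)
        (.of_forall fun N ↦ Nat.cast_nonneg _)).isBigO
  have hpow : (fun N ↦ f (N / k) ^ k) =O[atTop] fun N : ℕ ↦ (N : ℝ) ^ (k * (α - 1)) :=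
    (hdiv.pow k).congr_right fun N ↦ by
      rw [mul_comm, Real.rpow_mul_natCast (Nat.cast_nonneg _)]
  have hcoeff : (coeff · (psumSeries f k)) =O[atTop] fun N ↦ f (N / k) ^ k := by
    refine .of_bound 1 ?_
    filter_upwards [eventually_ne_atTop 0] with N hN
    rw [coeff_psumSeries f hN (by lia), one_mul]
    split_ifs
    · rfl
    · simp
  have hexp : k * (α - 1) < k * α - 1 := by
    have : (2 : ℝ) ≤ k := mod_cast hk
    linarith
  exact ((hcoeff.trans hpow).trans_isLittleO
    (natCast_rpow_isLittleO_natCast_rpow hexp)).trans_isBigO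
    (multichoose_isTheta_rpow (by positivity)).symm.isBigO

lemma hasCoeffAsymp_psumSeries (hα : 0 < α)
    (hf : Tendsto (fun n ↦ f n / Ring.multichoose α n) atTop (𝓝 A)) (hk : k ≠ 0) :
    HasCoeffAsymp (psumSeries f k) (k * α) (if k = 1 then A else 0) := by
  split_ifs with hk1
  · subst hk1
    rw [Nat.cast_one, one_mul, hasCoeffAsymp_iff_tendsto hα]
    refine hf.congr' ?_
    filter_upwards [eventually_ne_atTop 0] with N hN
    rw [coeff_psumSeries f hN one_ne_zero, if_pos (one_dvd N), Nat.div_one, pow_one]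
  · have hfO : f =O[atTop] Ring.multichoose α :=
      isBigO_of_div_tendsto_nhds (.of_forall fun n h ↦ absurd h (multichoose_pos hα n).ne') A hf
    simpa only [HasCoeffAsymp, zero_mul, sub_zero] using
      coeff_psumSeries_isLittleO hα hfO (by lia)

lemma sum_antidiagonal_newton_eq_mul_pow_div_factorial (A : ℝ) (hk : k ≠ 0) :
    ∑ a ∈ HasAntidiagonal.antidiagonal k with a.1 < k,
        (-1) ^ (k + 1 + a.1) * (A ^ a.1 / a.1.factorial * if a.2 = 1 then A else 0) =
      k * (A ^ k / k.factorial) := by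
  rw [sum_eq_single_of_mem (k - 1, 1)]
  · obtain ⟨j, rfl⟩ := Nat.exists_eq_succ_of_ne_zero hk
    have hsign : (-1 : ℝ) ^ (j + 1 + 1 + j) = 1 := Even.neg_one_pow ⟨j + 1, by ring⟩
    simp only [Nat.succ_eq_add_one, add_tsub_cancel_right, hsign, if_true,
      Nat.factorial_succ, pow_succ, Nat.cast_mul]
    field_simp
  · simp only [mem_filter, HasAntidiagonal.mem_antidiagonal]
    lia
  · intro a ha hne
    obtain ⟨hak, -⟩ := mem_filter.1 ha
    rw [HasAntidiagonal.mem_antidiagonal] at hak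
    have hsnd : a.2 ≠ 1 := fun h ↦ hne (Prod.ext (by lia) h)
    rw [if_neg hsnd, mul_zero, mul_zero]

lemma hasCoeffAsymp_esymmSeries (hα : 0 < α)
    (hf : Tendsto (fun n ↦ f n / Ring.multichoose α n) atTop (𝓝 A)) (hk : k ≠ 0) :
    HasCoeffAsymp (esymmSeries f k) (k * α) (A ^ k / k.factorial) := by
  induction k using Nat.strong_induction_on with
  | _ k ih =>
    have hterm (a : ℕ × ℕ) (ha : a ∈ {a ∈ HasAntidiagonal.antidiagonal k | a.1 < k}) :
        HasCoeffAsymp (((-1) ^ (k + 1 + a.1) : ℝ) • (esymmSeries f a.1 * psumSeries f a.2))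
          (k * α)
          ((-1) ^ (k + 1 + a.1) * (A ^ a.1 / a.1.factorial * if a.2 = 1 then A else 0)) := by
      obtain ⟨hak, hlt⟩ := mem_filter.1 ha
      rw [HasAntidiagonal.mem_antidiagonal] at hak
      have hsnd : a.2 ≠ 0 := by lia
      have hpsum := hasCoeffAsymp_psumSeries hα hf hsnd
      refine HasCoeffAsymp.const_smul ?_ _
      obtain hfst | hfst := eq_or_ne a.1 0
      · simpa [hfst, esymmSeries_zero, show a.2 = k by lia] using hpsum
      · rw [← hak, Nat.cast_add, add_mul]
        exact (ih a.1 hlt hfst).mul (by positivity) (by positivity) hpsum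
    have hsum := (HasCoeffAsymp.sum hterm).const_smul (k : ℝ)⁻¹
    have hk' : (k : ℝ) ≠ 0 := by positivity
    rwa [← natCast_smul_esymmSeries_eq_sum, inv_smul_smul₀ hk',
      sum_antidiagonal_newton_eq_mul_pow_div_factorial A hk, inv_mul_cancel_left₀ hk'] at hsum

lemma tendsto_coeff_esymmSeries_rpow {s : ℕ} (hs : s ≠ 0) :
    Tendsto (fun N ↦ coeff N (esymmSeries (fun a : ℕ ↦ (a : ℝ) ^ (-1 + 1 / (s : ℝ))) s)) atTop
      (𝓝 (Real.Gamma (1 / s) ^ s / s.factorial)) := by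
  have hs' : (0 : ℝ) < 1 / s := by positivity
  have hf : Tendsto (fun n : ℕ ↦ (n : ℝ) ^ (-1 + 1 / (s : ℝ)) / Ring.multichoose (1 / (s : ℝ)) n)
      atTop (𝓝 (Real.Gamma (1 / s))) := by
    simpa only [neg_add_eq_sub] using tendsto_rpow_sub_one_div_multichoose hs'
  have hasymp := hasCoeffAsymp_esymmSeries hs' hf hs
  rw [mul_one_div_cancel (by positivity), hasCoeffAsymp_iff_tendsto one_pos] at hasymp
  simpa only [Ring.multichoose_one, div_one] using hasymp

end Growth

section DecreasingTuples

lemma sum_piFinset_strictAnti_eq_sum_powersetCard {α M : Type*} [LinearOrder α] [AddCommMonoid M]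
    (t : Finset α) (s : ℕ) (F : Finset α → M) :
    ∑ x ∈ Fintype.piFinset fun _ : Fin s ↦ t with ∀ i j : Fin s, i < j → x j < x i,
        F (univ.image x) = ∑ S ∈ powersetCard s t, F S := by
  have hcard (x : Fin s → α) (hanti : ∀ i j : Fin s, i < j → x j < x i) :
      #(univ.image x) = s := by
    have hinj : Function.Injective x := StrictAnti.injective fun i j ↦ hanti i j
    rw [card_image_of_injective _ hinj, card_fin]
  refine sum_bij' (fun x _ ↦ univ.image x)
    (fun S hS ↦ S.orderEmbOfFin (mem_powersetCard.1 hS).2 ∘ Fin.rev) ?_ ?_ ?_ ?_ fun _ _ ↦ rfl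
  · intro x hx
    obtain ⟨hxt, hanti⟩ := mem_filter.1 hx
    exact mem_powersetCard.2 ⟨image_subset_iff.2 fun i _ ↦ Fintype.mem_piFinset.1 hxt i,
      hcard x hanti⟩
  · intro S hS
    refine mem_filter.2 ⟨Fintype.mem_piFinset.2 fun i ↦ ?_, fun i j hij ↦ ?_⟩
    · exact (mem_powersetCard.1 hS).1 (S.orderEmbOfFin_mem _ _)
    · exact (S.orderEmbOfFin _).strictMono (Fin.rev_strictAnti hij)
  · intro x hx
    obtain ⟨-, hanti⟩ := mem_filter.1 hx
    have hmono : StrictMono (x ∘ Fin.rev) := fun i j hij ↦ hanti _ _ (Fin.rev_strictAnti hij)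
    have huniq := orderEmbOfFin_unique (hcard x hanti) (fun i ↦ mem_image_of_mem x (mem_univ _))
      hmono
    funext i
    simpa using (congrFun huniq (Fin.rev i)).symm
  · intro S hS
    rw [← image_image, image_univ_of_surjective Fin.rev_surjective]
    simp

lemma sum_piFinset_decreasing_eq_coeff_esymmSeries {R : Type*} [CommRing R] (f : ℕ → R) (s : ℕ)
    {N n : ℕ} (hN : N ≤ n) :
    ∑ x ∈ (Fintype.piFinset fun _ : Fin s ↦ Icc 1 n) with
        (∀ i j : Fin s, i < j → x j < x i) ∧ ∑ i, x i = N, ∏ i, f (x i) =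
      PowerSeries.coeff N (esymmSeries f s) := by
  rw [coeff_esymmSeries_of_le f hN, sum_filter (s := powersetCard s _),
    ← sum_piFinset_strictAnti_eq_sum_powersetCard, ← filter_filter, sum_filter]
  refine sum_congr rfl fun x hx ↦ ?_
  obtain ⟨-, hanti⟩ := mem_filter.1 hx
  have hinj : Function.Injective x := StrictAnti.injective fun i j ↦ hanti i j
  rw [sum_image hinj.injOn, prod_image hinj.injOn]

end DecreasingTuples

section Averaging

lemma tendsto_sum_div_of_tendsto_card_div {ι β : Type*} {l : Filter ι} {T : ι → Finset β}
    {r : ι → ℝ} {u : ι → β → ℝ} {κ L : ℝ}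
    (hcard : Tendsto (fun n ↦ (#(T n) : ℝ) / r n) l (𝓝 κ))
    (hu : ∀ ε > 0, ∀ᶠ n in l, ∀ b ∈ T n, |u n b - L| ≤ ε) :
    Tendsto (fun n ↦ (∑ b ∈ T n, u n b) / r n) l (𝓝 (κ * L)) := by
  have hdev : (fun n ↦ ∑ b ∈ T n, (u n b - L)) =o[l] fun n ↦ (#(T n) : ℝ) := by
    refine isLittleO_iff.2 fun ε hε ↦ ?_
    filter_upwards [hu ε hε] with n hn
    calc ‖∑ b ∈ T n, (u n b - L)‖ ≤ ∑ _ ∈ T n, ε := norm_sum_le_of_le _ hn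
      _ = ε * ‖(#(T n) : ℝ)‖ := by
        rw [sum_const, nsmul_eq_mul, mul_comm, Real.norm_natCast]
  have hdev' : Tendsto (fun n ↦ (∑ b ∈ T n, (u n b - L)) / r n) l (𝓝 0) := by
    rw [← isLittleO_one_iff ℝ]
    exact (hdev.mul_isBigO (isBigO_refl (fun n ↦ (r n)⁻¹) l)).trans_isBigO
      (hcard.isBigO_one ℝ)
  have hadd := hdev'.add (hcard.mul_const L)
  rw [zero_add] at hadd
  refine hadd.congr fun n ↦ ?_
  rw [sum_sub_distrib, sum_const, nsmul_eq_mul]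
  ring

end Averaging

section Counting

variable {B : Set ℕ} {m : ℕ → ℕ} {c d κ : ℝ}

lemma tendsto_log_natCast_atTop : Tendsto (fun n : ℕ ↦ Real.log n) atTop atTop :=
  Real.tendsto_log_atTop.comp tendsto_natCast_atTop_atTop

lemma countB_eq_card_filter_Icc (B : Set ℕ) [DecidablePred (· ∈ B)] (k : ℕ) :
    countB B k = #{b ∈ Icc 1 k | b ∈ B} := by
  rw [countB, ← Set.ncard_coe_finset, coe_filter, Set.inter_comm]
  simp only [mem_Icc]
  rfl

lemma card_filter_Ico_le_countB (B : Set ℕ) [DecidablePred (· ∈ B)] (k : ℕ) :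
    #{b ∈ Ico 1 k | b ∈ B} ≤ countB B k := by
  rw [countB_eq_card_filter_Icc]
  exact card_le_card (filter_subset_filter _ Ico_subset_Icc_self)

lemma countB_le_card_filter_Ico_add_one (B : Set ℕ) [DecidablePred (· ∈ B)] (k : ℕ) :
    countB B k ≤ #{b ∈ Ico 1 k | b ∈ B} + 1 := by
  rw [countB_eq_card_filter_Icc]
  refine (card_le_card fun b hb ↦ ?_).trans (card_insert_le k _)
  simp only [mem_filter, mem_insert, mem_Ico, mem_Icc] at hb ⊢
  lia

lemma tendsto_card_filter_Ico_div_log [DecidablePred (· ∈ B)] (hκ : 0 ≤ κ)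
    (hm : ∀ᶠ n : ℕ in atTop, countB B (m n) = ⌊κ * Real.log n⌋₊) :
    Tendsto (fun n : ℕ ↦ (#{b ∈ Ico 1 (m n) | b ∈ B} : ℝ) / Real.log n) atTop (𝓝 κ) := by
  have hlower : Tendsto (fun n : ℕ ↦ κ - 2 / Real.log n) atTop (𝓝 κ) := by
    simpa using (tendsto_log_natCast_atTop.const_div_atTop 2).const_sub κ
  refine tendsto_of_tendsto_of_tendsto_of_le_of_le' hlower tendsto_const_nhds ?_ ?_
  all_goals filter_upwards [tendsto_log_natCast_atTop.eventually_gt_atTop 0, hm] with n hlog hcount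
  · have hcard : (countB B (m n) : ℝ) ≤ #{b ∈ Ico 1 (m n) | b ∈ B} + 1 :=
      mod_cast countB_le_card_filter_Ico_add_one B (m n)
    rw [le_div_iff₀ hlog, sub_mul, div_mul_cancel₀ _ hlog.ne']
    rw [hcount] at hcard
    linarith [Nat.lt_floor_add_one (κ * Real.log n)]
  · rw [div_le_iff₀ hlog]
    calc (#{b ∈ Ico 1 (m n) | b ∈ B} : ℝ) ≤ countB B (m n) :=
          mod_cast card_filter_Ico_le_countB B (m n)
      _ ≤ κ * Real.log n := hcount ▸ Nat.floor_le (mul_nonneg hκ hlog.le)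

lemma eventually_mul_log_le_of_lt {g : ℕ → ℝ} (hc : 0 < c) (hdc : d < c)
    (hg : ∀ ε : ℝ, 0 < ε → ∀ᶠ n : ℕ in atTop, (1 - ε) * (c * Real.log n) ≤ g n) :
    ∀ᶠ n : ℕ in atTop, d * Real.log n ≤ g n := by
  filter_upwards [hg (1 - d / c) (sub_pos.2 ((div_lt_one hc).2 hdc))] with n hn
  rwa [sub_sub_cancel, ← mul_assoc, div_mul_cancel₀ _ hc.ne'] at hn

lemma natCast_isLittleO_natCast_of_log_le {θ : ℝ} (hθ : θ < 1) (K : ℕ)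
    (hlog : ∀ᶠ n : ℕ in atTop, m n ≤ K ∨ Real.log (m n) ≤ θ * Real.log n) :
    (fun n ↦ (m n : ℝ)) =o[atTop] fun n : ℕ ↦ (n : ℝ) := by
  have hconst : (fun _ : ℕ ↦ (K : ℝ)) =o[atTop] fun n : ℕ ↦ (n : ℝ) :=
    (isLittleO_const_id_atTop _).comp_tendsto tendsto_natCast_atTop_atTop
  have hpow : (fun n : ℕ ↦ (n : ℝ) ^ θ) =o[atTop] fun n : ℕ ↦ (n : ℝ) := by
    simpa only [Real.rpow_one] using natCast_rpow_isLittleO_natCast_rpow hθ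
  refine IsBigO.trans_isLittleO (.of_bound 1 ?_) (hconst.add hpow)
  filter_upwards [hlog, eventually_gt_atTop 0] with n hn hpos
  have hn0 : (0 : ℝ) < n := mod_cast hpos
  have hpow0 : 0 ≤ (n : ℝ) ^ θ := by positivity
  rw [Real.norm_natCast, one_mul, Real.norm_of_nonneg (by positivity)]
  obtain hK | hlogle := hn
  · have : (m n : ℝ) ≤ K := mod_cast hK
    linarith
  · have : (m n : ℝ) ≤ (n : ℝ) ^ θ := by
      rw [Real.rpow_def_of_pos hn0, mul_comm]
      exact Real.le_exp_of_log_le hlogle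
    linarith [(Nat.cast_nonneg K : (0 : ℝ) ≤ K)]

lemma natCast_isLittleO_natCast_of_mul_log_le {g : ℕ → ℝ} (hκ : 0 ≤ κ) (hκd : κ < d)
    (hg : ∀ᶠ n : ℕ in atTop, d * Real.log n ≤ g n)
    (hm : ∀ᶠ n : ℕ in atTop, g (m n) ≤ κ * Real.log n) :
    (fun n ↦ (m n : ℝ)) =o[atTop] fun n : ℕ ↦ (n : ℝ) := by
  have hd : 0 < d := hκ.trans_lt hκd
  obtain ⟨K, hK⟩ := eventually_atTop.1 hg
  refine natCast_isLittleO_natCast_of_log_le ((div_lt_one hd).2 hκd) K ?_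
  filter_upwards [hm] with n hn
  refine (le_total (m n) K).imp_right fun hKm ↦ ?_
  rw [div_mul_eq_mul_div, le_div_iff₀' hd]
  exact (hK _ hKm).trans hn

lemma tendsto_sub_atTop_of_natCast_isLittleO
    (hm : (fun n ↦ (m n : ℝ)) =o[atTop] fun n : ℕ ↦ (n : ℝ)) :
    Tendsto (fun n ↦ n - m n) atTop atTop := by
  refine tendsto_atTop_mono' atTop ?_ (Nat.tendsto_div_const_atTop two_ne_zero)
  filter_upwards [isLittleO_iff.1 hm one_half_pos] with n hn
  rw [Real.norm_natCast, Real.norm_natCast] at hn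
  have hhalf : 2 * m n ≤ n := by
    have : 2 * (m n : ℝ) ≤ n := by linarith
    exact_mod_cast this
  lia

end Counting

lemma lambdaS_pos {s : ℕ} (hs : s ≠ 0) : 0 < lambdaS s := by
  have := Real.Gamma_pos_of_pos (s := 1 / (s : ℝ)) (by positivity)
  unfold lambdaS
  positivity

lemma tendsto_inv_pow_mul_coeff_esymmSeries {s : ℕ} (hs : s ≠ 0) :
    Tendsto (fun N ↦ ((s : ℝ) ^ s)⁻¹ *
        PowerSeries.coeff N (esymmSeries (fun a : ℕ ↦ (a : ℝ) ^ (-1 + 1 / (s : ℝ))) s)) atTop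
      (𝓝 (lambdaS s)) := by
  have hlambda : lambdaS s = ((s : ℝ) ^ s)⁻¹ * (Real.Gamma (1 / s) ^ s / s.factorial) := by
    rw [lambdaS, inv_mul_eq_div, div_div, mul_comm]
  exact hlambda ▸ (tendsto_coeff_esymmSeries_rpow hs).const_mul _

theorem stmt_11_general (s : ℕ) (hs : s ≠ 0) (c κ : ℝ) (hκ : 0 ≤ κ) (hκc : κ < c)
    (B : Set ℕ) [DecidablePred (· ∈ B)]
    (hB : ∀ ε : ℝ, 0 < ε → ∀ᶠ n : ℕ in atTop, (1 - ε) * (c * Real.log n) ≤ countB B n)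
    (m : ℕ → ℕ) (hm : ∀ᶠ n : ℕ in atTop, countB B (m n) = ⌊κ * Real.log n⌋₊) :
    Tendsto
      (fun n : ℕ ↦
        (∑ b ∈ Ico 1 (m n) with b ∈ B,
          ((s : ℝ) ^ s)⁻¹ *
            ∑ x ∈ Fintype.piFinset fun _ : Fin s ↦ Icc 1 n with
                (∀ i j : Fin s, i < j → x j < x i) ∧ ∑ i, x i = n - b,
              ∏ i, (x i : ℝ) ^ (-1 + 1 / (s : ℝ))) / Real.log n)
      atTop (𝓝 (κ * lambdaS s)) := by
  obtain ⟨d, hκd, hdc⟩ := exists_between hκc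
  have hmle : ∀ᶠ n : ℕ in atTop, (countB B (m n) : ℝ) ≤ κ * Real.log n := by
    filter_upwards [hm] with n hn
    exact hn ▸ Nat.floor_le (mul_nonneg hκ (Real.log_natCast_nonneg n))
  have hsub : Tendsto (fun n ↦ n - m n) atTop atTop :=
    tendsto_sub_atTop_of_natCast_isLittleO <| natCast_isLittleO_natCast_of_mul_log_le hκ hκd
      (eventually_mul_log_le_of_lt (hκ.trans_lt hκc) hdc hB) hmle
  refine tendsto_sum_div_of_tendsto_card_div (tendsto_card_filter_Ico_div_log hκ hm)
    fun ε hε ↦ ?_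
  obtain ⟨K, hK⟩ := Metric.tendsto_atTop.1 (tendsto_inv_pow_mul_coeff_esymmSeries hs) ε hε
  filter_upwards [hsub.eventually_ge_atTop K] with n hn b hb
  obtain ⟨-, hbm⟩ := mem_Ico.1 (mem_filter.1 hb).1
  rw [sum_piFinset_decreasing_eq_coeff_esymmSeries
    (fun a : ℕ ↦ (a : ℝ) ^ (-1 + 1 / (s : ℝ))) s (Nat.sub_le n b)]
  exact (hK (n - b) (by lia)).le

/-- Lemma 6 (Lemma `B`): for `c > λ_s⁻¹` and `B` infinite with `B(n) ≥ (1+o(1)) c log n`, with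
`m(n)` the least positive integer with `B(m(n)) = ⌊(c+λ_s⁻¹)/2 · log n⌋`, one has
`Σ_{b ∈ B, b < m(n)} s^{-s} Σ_{x_1 > ⋯ > x_s ≥ 1, x_1 + ⋯ + x_s = n - b} (x_1 ⋯ x_s)^{-1+1/s}
  = (1+o(1)) (c λ_s + 1)/2 · log n`. -/
theorem stmt_11 (s : ℕ) (hs : 2 ≤ s) (c : ℝ) (hc : (lambdaS s)⁻¹ < c)
    (B : Set ℕ) [DecidablePred (· ∈ B)] (hBpos : ∀ b ∈ B, 1 ≤ b) (hBinf : B.Infinite)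
    (hB : ∀ ε : ℝ, 0 < ε → ∀ᶠ n : ℕ in Filter.atTop,
      (1 - ε) * (c * Real.log n) ≤ (countB B n : ℝ))
    (m : ℕ → ℕ)
    (hm : ∀ n : ℕ, 2 ≤ n →
      1 ≤ m n ∧ countB B (m n) = ⌊((c + (lambdaS s)⁻¹) / 2) * Real.log n⌋₊ ∧
        ∀ k : ℕ, 1 ≤ k → countB B k = ⌊((c + (lambdaS s)⁻¹) / 2) * Real.log n⌋₊ → m n ≤ k) :
    Filter.Tendsto
      (fun n : ℕ =>
        (∑ b ∈ (Finset.Ico 1 (m n)).filter (· ∈ B),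
          ((s : ℝ) ^ s)⁻¹ *
            ∑ x ∈ (Fintype.piFinset fun _ : Fin s => Finset.Icc 1 n).filter
                (fun x : Fin s → ℕ => (∀ i j : Fin s, i < j → x j < x i) ∧ ∑ i, x i = n - b),
              ∏ i, (x i : ℝ) ^ (-1 + 1 / (s : ℝ))) / Real.log n)
      Filter.atTop (nhds ((c * lambdaS s + 1) / 2)) := by
  have hlam := lambdaS_pos (by lia : s ≠ 0)
  have hκ : 0 ≤ (c + (lambdaS s)⁻¹) / 2 := by linarith [inv_pos.2 hlam]
  have hlimit : (c * lambdaS s + 1) / 2 = (c + (lambdaS s)⁻¹) / 2 * lambdaS s := by field_simp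
  rw [hlimit]
  refine stmt_11_general s (by lia) c _ hκ (by linarith) B hB m ?_
  filter_upwards [eventually_ge_atTop 2] with n hn using (hm n hn).2.1
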